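/- arXiv:2509.20144 — 5 statements merged into one kernel-verified Lean document; each statement's English description precedes it below -/
import Mathlib

section
/- Let G be a finite group and X a cohomological Mackey functor for G. Then the six-term sequence 0 → c₁(G,X) → Ĥ⁻¹(G,X₁) → k⁰(G,X) → c₀(G,X) → Ĥ⁰(G,X₁) → k¹(G,X) → 0 is exact, where Ĥ⁻¹(G,X₁) := ker(x ↦ ∑_{g∈G} g•x) / ω_G X₁ and Ĥ⁰(G,X₁) := X₁^G / {∑_{g∈G} g•x : x ∈ X₁}, and the maps are: the map induced by the inclusion ker N ⊆ ker(x ↦ ∑_g g•x) (valid since I∘N equals the map x ↦ ∑_g g•x); the map induced by N (which sends ker(x ↦ ∑_g g•x) into ker I, since N(x') ∈ ker I whenever ∑_g g•x' = I(N(x')) = 0); the composite of the inclusion ker I ⊆ X_G with the projection X_G → c₀(G,X); the map induced by I (well defined since I(N(x)) = ∑_g g•x); and the projection induced by the identity of X₁^G (valid since {∑_g g•x} ⊆ I(X_G)). -/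
/-!
For any composable `N : A → B` and `I : B → C`, the kernels and cokernels of `N`, `I ∘ N` and `I`
form a six-term exact sequence, which stays exact when `ker N` and `ker (I ∘ N)` are divided by a
subgroup of `ker N` and `C` is replaced by a subgroup containing the image of `I`. For a Mackey
functor, `I ∘ N` is the norm map `x ↦ ∑ g • x`, `N` vanishes on `ω_G X₁`, and `X₁^G` replaces `X₁`
as the target of `I`.
-/

section AddGroup

variable {A B C : Type*} [AddGroup A] [AddGroup B] [AddGroup C]

theorem closure_sub_smul_le_ker {G : Type*} [SMul G A] {f : A →+ B}
    (hf : ∀ (g : G) (x : A), f (g • x) = f x) :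
    AddSubgroup.closure {z : A | ∃ (g : G) (x : A), z = x - g • x} ≤ f.ker := by
  rw [AddSubgroup.closure_le]
  rintro _ ⟨g, x, rfl⟩
  rw [SetLike.mem_coe, AddMonoidHom.mem_ker, map_sub, hf, sub_self]

-- The kernel of the projection `A ⧸ K → A ⧸ L` is the image of `L`.
theorem mem_iff_exists_mem_sub_mem {K L : AddSubgroup A} (hKL : K ≤ L) {x : A} :
    x ∈ L ↔ ∃ y ∈ L, x - y ∈ K := by
  refine ⟨fun hx ↦ ⟨x, hx, by simp only [sub_self, K.zero_mem]⟩, ?_⟩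
  rintro ⟨y, hy, hxy⟩
  exact sub_add_cancel x y ▸ L.add_mem (hKL hxy) hy

theorem map_mem_map_iff_exists_mem_ker_sub_mem (f : A →+ B) (K : AddSubgroup A) {x : A} :
    f x ∈ K.map f ↔ ∃ y ∈ f.ker, x - y ∈ K := by
  constructor
  · rintro ⟨k, hk, hkx⟩
    have hker : -k + x ∈ f.ker := by
      rw [AddMonoidHom.mem_ker, map_add, map_neg, hkx, neg_add_cancel]
    have hsub : x - (-k + x) = k := by
      rw [sub_eq_add_neg, neg_add_rev, neg_neg, add_neg_cancel_left]
    exact ⟨-k + x, hker, hsub.symm ▸ hk⟩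
  · rintro ⟨y, hy, hxy⟩
    exact ⟨x - y, hxy, by rw [map_sub, AddMonoidHom.mem_ker.mp hy, sub_zero]⟩

theorem mem_range_iff_exists_mem_ker_comp (f : A →+ B) (g : B →+ C) {y : B} (hy : y ∈ g.ker) :
    y ∈ f.range ↔ ∃ x ∈ (g.comp f).ker, f x = y := by
  constructor
  · rintro ⟨x, rfl⟩
    exact ⟨x, hy, rfl⟩
  · rintro ⟨x, -, hx⟩
    exact ⟨x, hx⟩

/- The groups of the sequence are `N.ker ⧸ ω`, `(I.comp N).ker ⧸ ω`, `I.ker`, `B ⧸ N.range`,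
`F ⧸ (I.comp N).range` and `F ⧸ I.range`, where `F ⊇ I.range` stands for the fixed points (`⧸` is
the set of right cosets if the groups are not abelian). Each clause is exactness at one of them,
expressed on representatives. -/
theorem sixTerm_exact_general (N : A →+ B) (I : B →+ C) {ω : AddSubgroup A} (hω : ω ≤ N.ker)
    (F : AddSubgroup C) :
    (∀ x ∈ N.ker, x ∈ ω → x ∈ ω) ∧
    (∀ x ∈ (I.comp N).ker, (x ∈ N.ker ↔ ∃ x' ∈ N.ker, x - x' ∈ ω)) ∧
    (∀ y ∈ I.ker, (y ∈ N.range ↔ ∃ x ∈ (I.comp N).ker, N x = y)) ∧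
    (∀ y : B, (I y ∈ (I.comp N).range ↔ ∃ y' ∈ I.ker, y - y' ∈ N.range)) ∧
    (∀ x ∈ F, (x ∈ I.range ↔ ∃ y : B, x - I y ∈ (I.comp N).range)) ∧
    (∀ x ∈ F, ∃ x' ∈ F, x - x' ∈ I.range) := by
  have hrange : (I.comp N).range ≤ I.range :=
    (AddMonoidHom.range_comp I N).trans_le (AddSubgroup.map_le_range I N.range)
  refine ⟨fun _ _ hx ↦ hx, fun _ _ ↦ mem_iff_exists_mem_sub_mem hω,
    fun _ hy ↦ mem_range_iff_exists_mem_ker_comp N I hy, fun y ↦ ?_, fun x _ ↦ ?_,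
    fun x hx ↦ ⟨x, hx, by simp only [sub_self, zero_mem]⟩⟩
  · rw [AddMonoidHom.range_comp, map_mem_map_iff_exists_mem_ker_sub_mem]
  · rw [mem_iff_exists_mem_sub_mem hrange]
    exact Set.exists_range_iff (p := fun z ↦ x - z ∈ (I.comp N).range)

end AddGroup

/-- Let `G` be a finite group and `X` a cohomological Mackey functor for `G`.
Then the six-term sequence
`0 → c₁(G,X) → Ĥ⁻¹(G,X₁) → k⁰(G,X) → c₀(G,X) → Ĥ⁰(G,X₁) → k¹(G,X) → 0`
is exact.  Here `Ĥ⁻¹(G,X₁) = ker(x ↦ ∑_g g•x) ⧸ ω_G X₁`, `Ĥ⁰(G,X₁) = X₁^G ⧸ {∑_g g•x}`,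
`c₁ = ker N ⧸ ω_G X₁`, `k⁰ = ker I`, `c₀ = X_G ⧸ N(X₁)`, `k¹ = X₁^G ⧸ I(X_G)`, and the maps
are as described.  Exactness is expressed elementwise on representatives:
each clause below states exactness at one node of the sequence. -/
theorem sixTerm_exact
    (G : Type*) [Group G] [Fintype G]
    (X1 XG : Type*) [AddCommGroup X1] [AddCommGroup XG] [DistribMulAction G X1]
    (N : X1 →+ XG) (I : XG →+ X1)
    (hN : ∀ (g : G) (x : X1), N (g • x) = N x)
    (hI : ∀ (g : G) (y : XG), g • I y = I y)
    (hIN : ∀ x : X1, I (N x) = ∑ g : G, g • x)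
    (hNI : ∀ y : XG, N (I y) = Fintype.card G • y)
    (ω : AddSubgroup X1)
    (hω : ω = AddSubgroup.closure {z : X1 | ∃ (g : G) (x : X1), z = x - g • x}) :
    -- exactness at `c₁(G,X)`: the map `c₁ → Ĥ⁻¹` induced by `ker N ⊆ ker(x ↦ ∑ g • x)`
    -- is injective
    (∀ x : X1, N x = 0 → x ∈ ω → x ∈ ω) ∧
    -- exactness at `Ĥ⁻¹(G,X₁)`: the class of `x ∈ ker(∑ g • ·)` maps to `0 = N x` in `k⁰`
    -- iff it comes from a class in `c₁`, i.e. differs by `ω_G X₁` from an element of `ker N`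
    (∀ x : X1, (∑ g : G, g • x) = 0 →
      (N x = 0 ↔ ∃ x' : X1, N x' = 0 ∧ x - x' ∈ ω)) ∧
    -- exactness at `k⁰(G,X)`: `y ∈ ker I` dies in `c₀ = X_G ⧸ N(X₁)` iff it is `N x`
    -- for some `x` with `∑ g • x = 0`
    (∀ y : XG, I y = 0 →
      ((∃ x : X1, N x = y) ↔ ∃ x : X1, (∑ g : G, g • x) = 0 ∧ N x = y)) ∧
    -- exactness at `c₀(G,X)`: the class of `y` dies in `Ĥ⁰` (i.e. `I y ∈ {∑ g • x}`)
    -- iff `y` differs by `N(X₁)` from an element of `ker I`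
    (∀ y : XG,
      ((∃ x : X1, I y = ∑ g : G, g • x) ↔ ∃ y' : XG, I y' = 0 ∧ y - y' ∈ N.range)) ∧
    -- exactness at `Ĥ⁰(G,X₁)`: the class of `x ∈ X₁^G` dies in `k¹` (i.e. `x ∈ I(X_G)`)
    -- iff `x` differs by `{∑ g • x'}` from an element `I y` of the image of `c₀ → Ĥ⁰`
    (∀ x : X1, (∀ g : G, g • x = x) →
      (x ∈ I.range ↔ ∃ (y : XG) (x' : X1), x - I y = ∑ g : G, g • x')) ∧
    -- exactness at `k¹(G,X)`: the map `Ĥ⁰ → k¹` induced by the identity of `X₁^G`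
    -- is surjective
    (∀ x : X1, (∀ g : G, g • x = x) →
      ∃ x' : X1, (∀ g : G, g • x' = x') ∧ x - x' ∈ I.range) := by
  subst hω
  simpa only [AddMonoidHom.mem_ker, AddMonoidHom.mem_range, AddMonoidHom.comp_apply, hIN, eq_comm,
    FixedPoints.mem_addSubgroup]
    using sixTerm_exact_general N I (closure_sub_smul_le_ker hN) (FixedPoints.addSubgroup G X1)
end

section
/- Let p be a prime and let n, k be natural numbers. If k ≥ n, then the number of n × k matrices over the field 𝔽_p = ℤ/pℤ whose rank equals n is ∏_{i=0}^{n-1} (p^k − p^i); equivalently, the proportion of full-rank matrices among all p^{n·k} matrices in 𝔽_p^{n×k} equals ∏_{i=0}^{n-1} (1 − p^{i−k}). If k < n, then no n × k matrix over 𝔽_p has rank n. -/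
/-!
A matrix has full row rank exactly when its rows are linearly independent, so full-rank matrices are
linearly independent families of vectors in `F ^ n`; choosing the rows one at a time, the `i`-th
must avoid a subspace with `q ^ i` elements. When there are more rows than columns, the factor
with `i = card n` is zero, so the product formula persists.
-/

open Finset

section LinearIndependent

variable {ι K V : Type*} [Fintype ι] [DivisionRing K] [Fintype K] [AddCommGroup V] [Module K V]
  [Finite V]

theorem card_linearIndependent_family :
    Nat.card {v : ι → V // LinearIndependent K v} =
      ∏ i ∈ range (Fintype.card ι),
        (Fintype.card K ^ Module.finrank K V - Fintype.card K ^ i) := by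
  obtain hle | hlt := le_or_gt (Fintype.card ι) (Module.finrank K V)
  · let e := Fintype.equivFin ι
    have reindex : {v : ι → V // LinearIndependent K v} ≃
        {v : Fin (Fintype.card ι) → V // LinearIndependent K v} :=
      (e.arrowCongr (.refl V)).subtypeEquiv fun _ ↦ (linearIndependent_equiv e.symm).symm
    rw [Nat.card_congr reindex, card_linearIndependent hle, prod_range]
  · have : IsEmpty {v : ι → V // LinearIndependent K v} :=
      ⟨fun v ↦ hlt.not_ge v.2.fintype_card_le_finrank⟩
    rw [Nat.card_of_isEmpty, prod_eq_zero (mem_range.mpr hlt) (by rw [Nat.sub_self])]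

end LinearIndependent

section FullRank

variable {m n F : Type*} [Fintype m] [Fintype n] [Field F]

theorem rank_eq_card_height_iff_linearIndependent_row {A : Matrix m n F} :
    A.rank = Fintype.card m ↔ LinearIndependent F A.row := by
  rw [linearIndependent_iff_card_eq_finrank_span, Set.finrank, A.rank_eq_finrank_span_row, eq_comm]

theorem card_matrix_rank_eq_card_height [Fintype F] :
    Nat.card {A : Matrix m n F // A.rank = Fintype.card m} =
      ∏ i ∈ range (Fintype.card m), (Fintype.card F ^ Fintype.card n - Fintype.card F ^ i) := by
  have rows : {A : Matrix m n F // A.rank = Fintype.card m} ≃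
      {v : m → n → F // LinearIndependent F v} :=
    Matrix.of.symm.subtypeEquiv fun _ ↦ rank_eq_card_height_iff_linearIndependent_row
  rw [Nat.card_congr rows, card_linearIndependent_family, Module.finrank_fintype_fun_eq_card]

end FullRank

theorem cast_prod_pow_sub_pow {R : Type*} [CommRing R] {q : ℕ} (hq : 0 < q) (n k : ℕ) :
    ((∏ i ∈ range n, (q ^ k - q ^ i) : ℕ) : R) = ∏ i ∈ range n, ((q : R) ^ k - (q : R) ^ i) := by
  obtain hle | hlt := le_or_gt n k
  · rw [Nat.cast_prod]
    refine prod_congr rfl fun i hi ↦ ?_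
    have hik : i ≤ k := (mem_range.mp hi).le.trans hle
    rw [Nat.cast_sub (Nat.pow_le_pow_right hq hik), Nat.cast_pow, Nat.cast_pow]
  · -- Natural subtraction truncates for `i > k`, but the factor at `i = k` is zero on both sides.
    rw [prod_eq_zero (mem_range.mpr hlt) (by rw [Nat.sub_self]), Nat.cast_zero,
      prod_eq_zero (mem_range.mpr hlt) (by rw [sub_self])]

theorem prod_pow_sub_pow_div_pow {K : Type*} [Field K] {x : K} (hx : x ≠ 0) (n k : ℕ) :
    (∏ i ∈ range n, (x ^ k - x ^ i)) / x ^ (n * k) =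
      ∏ i ∈ range n, (1 - x ^ ((i : ℤ) - (k : ℤ))) :=
  calc (∏ i ∈ range n, (x ^ k - x ^ i)) / x ^ (n * k)
      = ∏ i ∈ range n, (x ^ k - x ^ i) / x ^ k := by
        rw [prod_div_distrib, prod_const, card_range, ← pow_mul, mul_comm k]
    _ = ∏ i ∈ range n, (1 - x ^ ((i : ℤ) - (k : ℤ))) := by
        refine prod_congr rfl fun i _ ↦ ?_
        rw [sub_div, div_self (pow_ne_zero k hx), zpow_sub₀ hx, zpow_natCast, zpow_natCast]

theorem card_fullRank_matrices_general (m n F : Type*) [Fintype m] [Fintype n] [Field F]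
    [Fintype F] :
    Nat.card {A : Matrix m n F // A.rank = Fintype.card m} =
        ∏ i ∈ range (Fintype.card m), (Fintype.card F ^ Fintype.card n - Fintype.card F ^ i) ∧
    (Nat.card {A : Matrix m n F // A.rank = Fintype.card m} : ℝ) /
          (Fintype.card F : ℝ) ^ (Fintype.card m * Fintype.card n) =
        ∏ i ∈ range (Fintype.card m),
          (1 - (Fintype.card F : ℝ) ^ ((i : ℤ) - (Fintype.card n : ℤ))) ∧
    (Fintype.card n < Fintype.card m → ∀ A : Matrix m n F, A.rank ≠ Fintype.card m) := by
  refine ⟨card_matrix_rank_eq_card_height, ?_, fun hlt A ↦ (A.rank_le_card_width.trans_lt hlt).ne⟩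
  have hq : 0 < Fintype.card F := Fintype.card_pos
  rw [card_matrix_rank_eq_card_height, cast_prod_pow_sub_pow hq,
    prod_pow_sub_pow_div_pow (Nat.cast_ne_zero.mpr hq.ne')]

/-- Let `p` be a prime and `n, k` natural numbers.  If `k ≥ n`, the number
of `n × k` matrices over `𝔽_p = ZMod p` of rank `n` is `∏_{i=0}^{n-1} (p^k - p^i)`;
equivalently, the proportion of full-rank matrices among all `p^{n·k}` matrices equals
`∏_{i=0}^{n-1} (1 - p^{i-k})`.  If `k < n`, no `n × k` matrix over `𝔽_p` has rank `n`. -/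
theorem card_fullRank_matrices (p n k : ℕ) (hp : p.Prime) :
    (k ≥ n →
      Nat.card {A : Matrix (Fin n) (Fin k) (ZMod p) // A.rank = n} =
        ∏ i ∈ Finset.range n, (p ^ k - p ^ i)) ∧
    (k ≥ n →
      (Nat.card {A : Matrix (Fin n) (Fin k) (ZMod p) // A.rank = n} : ℝ) / (p : ℝ) ^ (n * k) =
        ∏ i ∈ Finset.range n, (1 - (p : ℝ) ^ ((i : ℤ) - (k : ℤ)))) ∧
    (k < n → ∀ A : Matrix (Fin n) (Fin k) (ZMod p), A.rank ≠ n) := by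
  have : Fact p.Prime := ⟨hp⟩
  obtain ⟨count, proportion, rank_ne⟩ := card_fullRank_matrices_general (Fin n) (Fin k) (ZMod p)
  simp only [Fintype.card_fin, ZMod.card] at count proportion rank_ne
  exact ⟨fun _ ↦ count, fun _ ↦ proportion, rank_ne⟩
end

section
/- Let n ≥ 1 and k be natural numbers with k > n. Then there exists a constant C (depending only on n and k) such that for every real number x, the sum over all primes p ≤ x of (1 − ∏_{i=0}^{n-1} (1 − p^{i−k})) is at most C. In other words, with P_{n,k}(x) modeling the number of primes p ≤ x for which a uniform random n×k matrix over 𝔽_p fails to have rank n, the expected value E[P_{n,k}(x)] = ∑_{p ≤ x prime} (1 − ∏_{i=0}^{n-1}(1 − p^{i−k})) is O(1). -/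
/-!
Row `i` of a random `n × k` matrix over a field with `q` elements lies in the span of the `i`
independent rows before it with probability `q ^ (i - k)`, so by a union bound the failure
probability is at most `n * q ^ (n - 1 - k)`. For `n < k` this is at most `n / q ^ 2`, whose sum
converges over all positive integers `q`, and a fortiori over the primes.
-/

open Finset

theorem one_sub_prod_one_sub_le_sum {ι R : Type*} [CommRing R] [LinearOrder R]
    [IsStrictOrderedRing R] {s : Finset ι} {a : ι → R}
    (h0 : ∀ i ∈ s, 0 ≤ a i) (h1 : ∀ i ∈ s, a i ≤ 1) :
    1 - ∏ i ∈ s, (1 - a i) ≤ ∑ i ∈ s, a i := by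
  induction s using Finset.cons_induction with
  | empty => simp
  | cons j s hj ih =>
    rw [forall_mem_cons] at h0 h1
    have prod_le_one : ∏ i ∈ s, (1 - a i) ≤ 1 :=
      prod_le_one (fun i hi => sub_nonneg.2 (h1.2 i hi)) fun i hi => sub_le_self 1 (h0.2 i hi)
    rw [prod_cons, sum_cons]
    calc 1 - (1 - a j) * ∏ i ∈ s, (1 - a i)
        = a j * ∏ i ∈ s, (1 - a i) + (1 - ∏ i ∈ s, (1 - a i)) := by ring
      _ ≤ a j + ∑ i ∈ s, a i :=
        add_le_add (mul_le_of_le_one_right h0.1 prod_le_one) (ih h0.2 h1.2)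

theorem one_sub_prod_one_sub_zpow_le {K : Type*} [Field K] [LinearOrder K]
    [IsStrictOrderedRing K] {q : K} (hq : 1 ≤ q) {n k : ℕ} (hnk : n ≤ k) :
    1 - ∏ i ∈ range n, (1 - q ^ ((i : ℤ) - (k : ℤ))) ≤ n * q ^ ((n : ℤ) - 1 - (k : ℤ)) := by
  have q_pos : 0 < q := one_pos.trans_le hq
  have index_lt {i : ℕ} (hi : i ∈ range n) : i < n := mem_range.1 hi
  calc 1 - ∏ i ∈ range n, (1 - q ^ ((i : ℤ) - (k : ℤ)))
      ≤ ∑ i ∈ range n, q ^ ((i : ℤ) - (k : ℤ)) :=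
        one_sub_prod_one_sub_le_sum (fun i _ => zpow_nonneg q_pos.le _) fun i hi =>
          zpow_le_one_of_nonpos₀ hq (by have := index_lt hi; lia)
    _ ≤ ∑ _i ∈ range n, q ^ ((n : ℤ) - 1 - (k : ℤ)) :=
        sum_le_sum fun i hi => zpow_le_zpow_right₀ hq (by have := index_lt hi; lia)
    _ = n * q ^ ((n : ℤ) - 1 - (k : ℤ)) := by
        rw [sum_const, card_range, nsmul_eq_mul]

theorem expected_rank_failures_bounded_general {n k : ℕ} (hk : n < k) {s : Finset ℕ}
    (hs : 0 ∉ s) :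
    ∑ q ∈ s, (1 - ∏ i ∈ range n, (1 - (q : ℝ) ^ ((i : ℤ) - (k : ℤ)))) ≤
      n * (Real.pi ^ 2 / 6) := by
  have term_le (q : ℕ) (hq : q ∈ s) :
      1 - ∏ i ∈ range n, (1 - (q : ℝ) ^ ((i : ℤ) - (k : ℤ))) ≤ n * (1 / (q : ℝ) ^ 2) := by
    have one_le_q : (1 : ℝ) ≤ q :=
      Nat.one_le_cast.2 (Nat.one_le_iff_ne_zero.2 (ne_of_mem_of_not_mem hq hs))
    calc 1 - ∏ i ∈ range n, (1 - (q : ℝ) ^ ((i : ℤ) - (k : ℤ)))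
        ≤ n * (q : ℝ) ^ ((n : ℤ) - 1 - (k : ℤ)) := one_sub_prod_one_sub_zpow_le one_le_q hk.le
      _ ≤ n * (q : ℝ) ^ (-2 : ℤ) := by
          gcongr
          lia
      _ = n * (1 / (q : ℝ) ^ 2) := by rw [zpow_neg, one_div, zpow_ofNat]
  calc ∑ q ∈ s, (1 - ∏ i ∈ range n, (1 - (q : ℝ) ^ ((i : ℤ) - (k : ℤ))))
      ≤ ∑ q ∈ s, n * (1 / (q : ℝ) ^ 2) := sum_le_sum term_le
    _ = n * ∑ q ∈ s, 1 / (q : ℝ) ^ 2 := (mul_sum ..).symm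
    _ ≤ n * (Real.pi ^ 2 / 6) := by
        gcongr
        exact sum_le_hasSum s (fun _ _ => by positivity) hasSum_zeta_two

/-- Let `n ≥ 1` and `k > n` be natural numbers.  Then there is a constant
`C` (depending only on `n` and `k`) such that for every real `x`, the sum over all primes
`p ≤ x` of `1 - ∏_{i=0}^{n-1} (1 - p^{i-k})` is at most `C`; i.e. the expected number
`E[P_{n,k}(x)]` of primes `p ≤ x` for which a uniform random `n × k` matrix over `𝔽_p`
fails to have full rank `n` is `O(1)`. -/
theorem expected_rank_failures_bounded (n k : ℕ) (hn : 1 ≤ n) (hk : n < k) :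
    ∃ C : ℝ, ∀ x : ℝ,
      ∑ p ∈ (Finset.range (⌊x⌋₊ + 1)).filter Nat.Prime,
        (1 - ∏ i ∈ Finset.range n, (1 - (p : ℝ) ^ ((i : ℤ) - (k : ℤ)))) ≤ C :=
  ⟨n * (Real.pi ^ 2 / 6), fun _ => expected_rank_failures_bounded_general hk
    fun h => Nat.not_prime_zero (mem_filter.1 h).2⟩
end

section
/- Let K be a number field with ring of integers O_K, let ℓ be a prime number, and let Y := {α ∈ K^× : the principal fractional ideal (α) is the ℓ-th power of some nonzero fractional ideal of O_K}. Then the quotient group Y / K^{×ℓ} is finite. -/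
open NumberField nonZeroDivisors

/-!
Let `U` be the kernel of the map `Kˣ → J` to invertible fractional ideals, that is, the unit group,
and `P` its image; `Y` is the preimage of the group `Jⁿ` of `n`-th powers. The chain
`Kˣⁿ ≤ Kˣⁿ U ≤ Y` has finite steps: `Kˣⁿ U / Kˣⁿ` is a quotient of `U / Uⁿ`, and `Y / Kˣⁿ U` embeds
into `Jⁿ / Pⁿ`, which is a quotient of the class group `J / P`.
-/

section Group

variable {G H : Type*}

theorem isFiniteRelIndex_map_range [Group G] [Group H] (f : G →* H) (A : Subgroup G)
    [A.FiniteIndex] : (A.map f).IsFiniteRelIndex f.range := by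
  have : (A ⊔ f.ker).FiniteIndex := Subgroup.finiteIndex_of_le le_sup_left
  rw [Subgroup.isFiniteRelIndex_iff_relIndex_ne_zero, MonoidHom.range_eq_map,
    Subgroup.relIndex_map_map, top_sup_eq, Subgroup.relIndex_top_right]
  exact Subgroup.FiniteIndex.index_ne_zero

variable [CommGroup G] [CommGroup H] (f : G →* H) (n : ℕ)

theorem map_powMonoidHom_range :
    f.range.map (powMonoidHom n) = (powMonoidHom n : G →* G).range.map f := by
  rw [MonoidHom.map_range, MonoidHom.map_range]
  congr 1
  ext x
  simp only [MonoidHom.comp_apply, powMonoidHom_apply, map_pow]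

theorem isFiniteRelIndex_comap_range_powMonoidHom [f.range.FiniteIndex]
    [(f.ker.map (powMonoidHom n)).IsFiniteRelIndex f.ker] :
    (powMonoidHom n : G →* G).range.IsFiniteRelIndex
      ((powMonoidHom n : H →* H).range.comap f) := by
  have kernel_step : (powMonoidHom n : G →* G).range.relIndex
      ((powMonoidHom n : G →* G).range ⊔ f.ker) ≠ 0 := by
    have := Subgroup.isFiniteRelIndex_of_le_left (K := (powMonoidHom n : G →* G).range) f.ker
      (Subgroup.map_le_range (powMonoidHom n) f.ker)
    rw [Subgroup.relIndex_sup_left]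
    exact Subgroup.relIndex_ne_zero
  have image_step : ((powMonoidHom n : G →* G).range ⊔ f.ker).relIndex
      ((powMonoidHom n : H →* H).range.comap f) ≠ 0 := by
    have := isFiniteRelIndex_map_range (powMonoidHom n) f.range
    rw [← Subgroup.comap_map_eq, ← map_powMonoidHom_range]
    exact Subgroup.relIndex_comap_ne_zero f Subgroup.relIndex_ne_zero
  exact ⟨Subgroup.relIndex_ne_zero_trans kernel_step image_step⟩

end Group

section FractionalIdeal

variable (R K : Type*) [CommRing R] [Field K] [Algebra R K] [IsFractionRing R K] [IsDomain R]

theorem ker_toPrincipalIdeal :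
    (toPrincipalIdeal R K).ker = (Units.map (algebraMap R K : R →* K)).range := by
  ext x
  rw [MonoidHom.mem_ker, eq_comm, ← map_one (toPrincipalIdeal R K), toPrincipalIdeal_eq_iff,
    coe_toPrincipalIdeal, FractionalIdeal.spanSingleton_eq_spanSingleton]
  simp only [Units.val_one, Units.smul_def, ← Algebra.algebraMap_eq_smul_one, MonoidHom.mem_range,
    Units.ext_iff, Units.coe_map, MonoidHom.coe_coe]

theorem finiteIndex_range_toPrincipalIdeal [Finite (ClassGroup R)] :
    (toPrincipalIdeal R K).range.FiniteIndex :=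
  Subgroup.finiteIndex_iff_finite_quotient.mpr <|
    Finite.of_equiv _ (ClassGroup.equiv (R := R) K).toEquiv

theorem isFiniteRelIndex_map_powMonoidHom_ker_toPrincipalIdeal (n : ℕ)
    [(powMonoidHom n : Rˣ →* Rˣ).range.FiniteIndex] :
    ((toPrincipalIdeal R K).ker.map (powMonoidHom n)).IsFiniteRelIndex
      (toPrincipalIdeal R K).ker := by
  rw [ker_toPrincipalIdeal, map_powMonoidHom_range]
  exact isFiniteRelIndex_map_range _ _

theorem selmer_quotient_finite_general [Finite (ClassGroup R)] (n : ℕ)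
    [(powMonoidHom n : Rˣ →* Rˣ).range.FiniteIndex] (Y : Subgroup Kˣ)
    (hY : (Y : Set Kˣ) = {α : Kˣ | ∃ I : (FractionalIdeal R⁰ K)ˣ,
        I ^ n = toPrincipalIdeal R K α}) :
    Finite (Y ⧸ ((powMonoidHom n : Kˣ →* Kˣ).range.subgroupOf Y)) := by
  obtain rfl : Y = (powMonoidHom n).range.comap (toPrincipalIdeal R K) := SetLike.coe_injective hY
  have := finiteIndex_range_toPrincipalIdeal R K
  have := isFiniteRelIndex_map_powMonoidHom_ker_toPrincipalIdeal R K n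
  have := isFiniteRelIndex_comap_range_powMonoidHom (toPrincipalIdeal R K) n
  infer_instance

end FractionalIdeal

theorem finiteIndex_range_powMonoidHom_units (K : Type*) [Field K] [NumberField K] {n : ℕ}
    (hn : n ≠ 0) : (powMonoidHom n : (𝓞 K)ˣ →* (𝓞 K)ˣ).range.FiniteIndex := by
  have : Group.FG (𝓞 K)ˣ := Group.fg_iff_monoid_fg.mpr inferInstance
  exact Subgroup.finiteIndex_range_powMonoidHom_of_fg (𝓞 K)ˣ hn

/-- Let `K` be a number field, `ℓ` a prime, and
`Y = {α ∈ K^× : (α) = 𝔞^ℓ for some nonzero fractional ideal 𝔞 of O_K}`.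
Then `Y / K^{×ℓ}` is finite. -/
theorem selmer_quotient_finite (K : Type*) [Field K] [NumberField K] (ℓ : ℕ) (hℓ : ℓ.Prime)
    (Y : Subgroup Kˣ)
    (hY : (Y : Set Kˣ) = {α : Kˣ | ∃ I : (FractionalIdeal (𝓞 K)⁰ K)ˣ,
        I ^ ℓ = toPrincipalIdeal (𝓞 K) K α}) :
    Finite (Y ⧸ ((powMonoidHom ℓ : Kˣ →* Kˣ).range.subgroupOf Y)) := by
  have := finiteIndex_range_powMonoidHom_units K hℓ.ne_zero
  exact selmer_quotient_finite_general (𝓞 K) K ℓ Y hY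
end

section
/- Let p be a prime and Λ := ℤ_p⟦T⟧ the ring of formal power series over the p-adic integers. Let M be a finitely generated Λ-module, Z ⊆ M a Λ-submodule, and n₀ ≤ n natural numbers. For each m ≥ n₀ let ν_m ∈ Λ denote the unique element satisfying ν_m · ((1+T)^{p^{n₀}} − 1) = (1+T)^{p^m} − 1. Suppose that the quotient M/(T·M + ν_n·Z) is finite and that T·M + ν_{n+1}·Z = T·M + ν_n·Z as submodules of M (i.e. the natural surjection M/(T·M + ν_{n+1}·Z) → M/(T·M + ν_n·Z) is an isomorphism). Then ν_n·Z ⊆ T·M; consequently M/(T·M) is finite and the natural surjection M/(T·M) → M/(T·M + ν_n·Z) is an isomorphism. -/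
/-!
The quotient `Φ = ν_{n+1} / ν_n` is the geometric sum `∑ i < p, (1 + T) ^ (i * p ^ n)`, whose value
at `T = 0` is `p`. Hence `Φ` lies in the Jacobson radical of `Λ`. Stabilization gives
`ν_n Z ⊆ T M + Φ (ν_n Z)`, so Nakayama's lemma kills the image of `ν_n Z` in `M / T M`.
-/

section Stabilization

open Finset PowerSeries
open scoped Pointwise

theorem le_of_le_sup_smul_of_mem_jacobson_bot {R M : Type*} [CommRing R] [AddCommGroup M]
    [Module R M] {r : R} {N Y : Submodule R M} (hY : Y.FG)
    (hr : r ∈ Ideal.jacobson (⊥ : Ideal R)) (hle : Y ≤ N ⊔ r • Y) : Y ≤ N := by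
  rw [← Submodule.ideal_span_singleton_smul] at hle
  exact Submodule.le_of_le_smul_of_le_jacobson_bot hY
    ((Ideal.span_singleton_le_iff_mem _).mpr hr) hle

theorem eq_geom_sum_mul_of_isRightRegular {R : Type*} [Ring R] {x d a b : R} {k : ℕ}
    (hd : IsRightRegular d) (ha : a * d = x - 1) (hb : b * d = x ^ k - 1) :
    b = (∑ i ∈ range k, x ^ i) * a :=
  hd <| calc
    b * d = (∑ i ∈ range k, x ^ i) * (x - 1) := by rw [hb, geom_sum_mul]
    _ = (∑ i ∈ range k, x ^ i) * a * d := by rw [mul_assoc, ha]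

variable {R : Type*} [CommRing R]

theorem powerSeries_mem_jacobson_bot_iff {f : R⟦X⟧} :
    f ∈ Ideal.jacobson (⊥ : Ideal R⟦X⟧) ↔ constantCoeff f ∈ Ideal.jacobson (⊥ : Ideal R) := by
  simp only [Ideal.mem_jacobson_bot, isUnit_iff_constantCoeff, map_add, map_mul, map_one]
  exact (constantCoeff_surj.forall (p := fun c ↦ IsUnit (constantCoeff f * c + 1))).symm

theorem one_add_X_pow_sub_one_ne_zero [Nontrivial R] {m : ℕ} (hm : m ≠ 0) :
    ((1 + X) ^ m - 1 : R⟦X⟧) ≠ 0 := by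
  have coeff_eq_one : coeff m ((1 + X) ^ m - 1 : R⟦X⟧) = 1 := by
    have h := Polynomial.coeff_one_add_X_pow R m m
    rw [← Polynomial.coeff_coe] at h
    simpa [coeff_one, hm] using h
  intro h
  simp [h] at coeff_eq_one

theorem constantCoeff_geom_sum_one_add_X_pow (k m : ℕ) :
    constantCoeff (∑ i ∈ range k, ((1 + X : R⟦X⟧) ^ m) ^ i) = k := by
  simp

theorem iwasawa_stabilization_general [IsDomain R] {p : ℕ} (hp₀ : p ≠ 0)
    (hp : (p : R) ∈ Ideal.jacobson (⊥ : Ideal R)) {M : Type*} [AddCommGroup M] [Module R⟦X⟧ M]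
    {N Z : Submodule R⟦X⟧ M} (hZ : Z.FG) {n₀ n : ℕ} {ν ν' : R⟦X⟧}
    (hν : ν * ((1 + X) ^ p ^ n₀ - 1) = (1 + X) ^ p ^ n - 1)
    (hν' : ν' * ((1 + X) ^ p ^ n₀ - 1) = (1 + X) ^ p ^ (n + 1) - 1)
    (hstab : N ⊔ ν' • Z = N ⊔ ν • Z) : ν • Z ≤ N := by
  rw [pow_succ, pow_mul] at hν'
  set Φ : R⟦X⟧ := ∑ i ∈ range p, ((1 + X) ^ p ^ n) ^ i
  have hΦ : Φ ∈ Ideal.jacobson (⊥ : Ideal R⟦X⟧) := by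
    rwa [powerSeries_mem_jacobson_bot_iff, constantCoeff_geom_sum_one_add_X_pow]
  have hd : ((1 + X) ^ p ^ n₀ - 1 : R⟦X⟧) ≠ 0 :=
    one_add_X_pow_sub_one_ne_zero (pow_ne_zero n₀ hp₀)
  have hν'_eq : ν' = Φ * ν :=
    eq_geom_sum_mul_of_isRightRegular (IsRegular.of_ne_zero hd).right hν hν'
  refine le_of_le_sup_smul_of_mem_jacobson_bot (hZ.map _) hΦ ?_
  rw [smul_smul, ← hν'_eq, hstab]
  exact le_sup_right

end Stabilization

/-- Let `p` be a prime and `Λ = ℤ_p⟦T⟧`.  Let `M` be a finitely generated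
`Λ`-module, `Z ⊆ M` a `Λ`-submodule, and `n₀ ≤ n` natural numbers.  For `m ≥ n₀` let
`ν_m ∈ Λ` be the unique element with `ν_m · ((1+T)^{p^{n₀}} - 1) = (1+T)^{p^m} - 1`.
If `M/(T·M + ν_n·Z)` is finite and `T·M + ν_{n+1}·Z = T·M + ν_n·Z`, then `ν_n·Z ⊆ T·M`;
consequently `M/(T·M)` is finite and the natural surjection
`M/(T·M) → M/(T·M + ν_n·Z)` is an isomorphism (i.e. `T·M + ν_n·Z = T·M`). -/
theorem iwasawa_stabilization (p : ℕ) [Fact p.Prime]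
    (M : Type*) [AddCommGroup M] [Module (PowerSeries ℤ_[p]) M]
    [Module.Finite (PowerSeries ℤ_[p]) M]
    (Z : Submodule (PowerSeries ℤ_[p]) M)
    (n₀ n : ℕ) (hn : n₀ ≤ n)
    -- the elements `ν_n` and `ν_{n+1}`
    (νn νn1 : PowerSeries ℤ_[p])
    (hνn : νn * ((1 + PowerSeries.X) ^ p ^ n₀ - 1) = (1 + PowerSeries.X) ^ p ^ n - 1)
    (hνn1 : νn1 * ((1 + PowerSeries.X) ^ p ^ n₀ - 1) =
      (1 + PowerSeries.X) ^ p ^ (n + 1) - 1)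
    -- the submodules `T·M`, `ν_n·Z` and `ν_{n+1}·Z`
    (TM : Submodule (PowerSeries ℤ_[p]) M)
    (hTM : TM = Submodule.map (LinearMap.lsmul (PowerSeries ℤ_[p]) M PowerSeries.X) ⊤)
    (Zn Zn1 : Submodule (PowerSeries ℤ_[p]) M)
    (hZn : Zn = Submodule.map (LinearMap.lsmul (PowerSeries ℤ_[p]) M νn) Z)
    (hZn1 : Zn1 = Submodule.map (LinearMap.lsmul (PowerSeries ℤ_[p]) M νn1) Z)
    -- the hypotheses: finiteness of `M/(T·M + ν_n·Z)` and stabilization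
    (hfin : Finite (M ⧸ (TM ⊔ Zn)))
    (hstab : TM ⊔ Zn1 = TM ⊔ Zn) :
    Zn ≤ TM ∧ Finite (M ⧸ TM) ∧ TM ⊔ Zn = TM := by
  subst hZn hZn1
  have hp : (p : ℤ_[p]) ∈ Ideal.jacobson (⊥ : Ideal ℤ_[p]) := by
    rw [IsLocalRing.jacobson_eq_maximalIdeal ⊥ bot_ne_top]
    exact PadicInt.prime_p.not_isUnit
  have hle := iwasawa_stabilization_general (NeZero.ne p) hp (IsNoetherian.noetherian Z)
    hνn hνn1 hstab
  have hsup := sup_eq_left.mpr hle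
  exact ⟨hle, hsup ▸ hfin, hsup⟩
end
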